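/- Let (W, S) be a Coxeter system whose Coxeter graph is bipartite, with 2-colouring ε. Let w ∈ W_c be such that |𝓛(w)| = n(w) (respectively |𝓡(w)| = n(w)), and suppose w is left (respectively right) star reducible to x ∈ W_c. Then k_ε(w) = −k_ε(x). -/

import Mathlib

open CoxeterSystem

variable {B W : Type*} [Group W] {M : CoxeterMatrix B} (cs : CoxeterSystem M W)

/-- `m(s,t) ≥ 3`: `s` and `t` are distinct noncommuting generators
(`M s t = 0` encodes `m(s,t) = ∞`). -/
def Noncomm (M : CoxeterMatrix B) (s t : B) : Prop := M s t = 0 ∨ 3 ≤ M s t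

/-- The longest element `w_{st}` of the rank-2 parabolic subgroup `⟨s,t⟩`
(meaningful when `3 ≤ M s t < ∞`). -/
def longest (s t : B) : W := cs.wordProd (alternatingWord s t (M s t))

/-- `w` is complex: it admits a reduced factorization `x₁ · w_{st} · x₂` where `w_{st}`
is the longest element of a rank-2 parabolic subgroup `⟨s,t⟩` with `3 ≤ m(s,t) < ∞`. -/
def IsComplex (w : W) : Prop :=
  ∃ s t : B, 3 ≤ M s t ∧ ∃ x₁ x₂ : W,
    w = x₁ * longest cs s t * x₂ ∧
    cs.length w = cs.length x₁ + cs.length (longest cs s t : W) + cs.length x₂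

/-- `w` is fully commutative, i.e. `w ∈ W_c`. -/
def FullyComm (w : W) : Prop := ¬ IsComplex cs w

/-- `x` is weakly complex: `x` is complex and `x = s·u` reduced with `u` fully commutative. -/
def IsWeaklyComplex (x : W) : Prop :=
  IsComplex cs x ∧ ∃ (s : B) (u : W), FullyComm cs u ∧ x = cs.simple s * u ∧
    cs.length x = 1 + cs.length u

/-- The alternating product `t s t s ⋯` with `k` factors, beginning with `t`. -/
def altProd (t s : B) (k : ℕ) : W :=
  cs.wordProd ((List.range k).map (fun i => if i % 2 = 0 then t else s))

/-- The left descent set `𝓛(w)`. -/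
def leftDescents (w : W) : Set B := {i | cs.IsLeftDescent w i}

/-- The right descent set `𝓡(w)`. -/
def rightDescents (w : W) : Set B := {i | cs.IsRightDescent w i}

/-- `w` is a reduced product of distinct pairwise commuting generators. -/
def IsCommProd (w : W) : Prop :=
  ∃ l : List B, l.Nodup ∧ (∀ u ∈ l, ∀ u' ∈ l, u ≠ u' → M u u' = 2) ∧
    cs.IsReduced l ∧ w = cs.wordProd l

/-- `y` is left star reducible to `x` with respect to the pair `{s,t}`:
`x` and `y` lie in the same left `{s,t}`-string and `ℓ(x) = ℓ(y) − 1`. -/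
def LeftStarReducible (s t : B) (y x : W) : Prop :=
  Noncomm M s t ∧
  ((cs.IsLeftDescent y s ∧ ¬ cs.IsLeftDescent y t ∧ x = cs.simple s * y ∧
      cs.IsLeftDescent x t) ∨
   (cs.IsLeftDescent y t ∧ ¬ cs.IsLeftDescent y s ∧ x = cs.simple t * y ∧
      cs.IsLeftDescent x s))

/-- `y` is right star reducible to `x` with respect to the pair `{s,t}`. -/
def RightStarReducible (s t : B) (y x : W) : Prop :=
  Noncomm M s t ∧
  ((cs.IsRightDescent y s ∧ ¬ cs.IsRightDescent y t ∧ x = y * cs.simple s ∧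
      cs.IsRightDescent x t) ∨
   (cs.IsRightDescent y t ∧ ¬ cs.IsRightDescent y s ∧ x = y * cs.simple t ∧
      cs.IsRightDescent x s))

/-- `y` is star reducible to `x`: there is a (possibly empty) chain of left and right
star reductions from `y` to `x`. -/
def StarReducible (y x : W) : Prop :=
  Relation.ReflTransGen
    (fun a b => ∃ s t : B, LeftStarReducible cs s t a b ∨ RightStarReducible cs s t a b) y x

/-- Property F: every fully commutative element is star reducible to a reduced product of
distinct pairwise commuting generators. -/
def PropertyF : Prop := ∀ w : W, FullyComm cs w → ∃ x : W, StarReducible cs w x ∧ IsCommProd cs x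

/-- `n(w)`: the maximum `k` such that `w` admits a reduced factorization `w = w₁·w₂·w₃`
with `w₂` a reduced product of `k` distinct pairwise commuting generators. -/
noncomputable def nval (w : W) : ℕ :=
  sSup {k | ∃ w₁ w₂ w₃ : W, w = w₁ * w₂ * w₃ ∧
    cs.length w = cs.length w₁ + cs.length w₂ + cs.length w₃ ∧
    IsCommProd cs w₂ ∧ cs.length w₂ = k}

/-- The Bruhat order: `x ≤ w` iff some reduced word for `w` has a subword that is a
reduced word for `x`. -/
def BruhatLE (x w : W) : Prop :=
  ∃ l l' : List B, cs.IsReduced l ∧ cs.wordProd l = w ∧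
    l'.Sublist l ∧ cs.IsReduced l' ∧ cs.wordProd l' = x

/-- `w = wI · wII` is the coset decomposition of `w` with respect to `I = {s,t}`:
`wI ∈ W_I`, `𝓛(wII) ∩ I = ∅` and `ℓ(w) = ℓ(wI) + ℓ(wII)`. -/
def CosetDecompL (s t : B) (w wI wII : W) : Prop :=
  w = wI * wII ∧ wI ∈ Subgroup.closure {cs.simple s, cs.simple t} ∧
  ¬ cs.IsLeftDescent wII s ∧ ¬ cs.IsLeftDescent wII t ∧
  cs.length w = cs.length wI + cs.length wII

/-- `w = wII · wI` is the right coset decomposition of `w` with respect to `I = {s,t}`: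
`wI ∈ W_I`, `𝓡(wII) ∩ I = ∅` and `ℓ(w) = ℓ(wII) + ℓ(wI)`. -/
def CosetDecompR (s t : B) (w wII wI : W) : Prop :=
  w = wII * wI ∧ wI ∈ Subgroup.closure {cs.simple s, cs.simple t} ∧
  ¬ cs.IsRightDescent wII s ∧ ¬ cs.IsRightDescent wII t ∧
  cs.length w = cs.length wII + cs.length wI

/-- `k_ε(J) = (−1)^{|J ∩ ε⁻¹(0)|}` for a set `J` of generators. -/
noncomputable def kSet (ε : B → Bool) (J : Set B) : ℤ :=
  (-1) ^ (J ∩ {i | ε i = false}).ncard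

/-- `k_ε(w) = k_ε(𝓛(w)) · k_ε(𝓡(w))`. -/
noncomputable def kElt (ε : B → Bool) (w : W) : ℤ :=
  kSet ε (leftDescents cs w) * kSet ε (rightDescents cs w)

/-!
By inversion it suffices to treat right star reductions, say `x = w s` with `t ∈ 𝓡(x) \ 𝓡(w)` and
`m(s,t) ≥ 3`. By the exchange condition, an element with two right descents `a`, `b` ends with
`w_{ab}`. Hence distinct right descents of a fully commutative element commute, and it ends with
the product of all of them; moreover `𝓡(w) \ {s} ⊆ 𝓡(x)`. As `w = x s` is reduced, this gives
`|𝓡(x)| ≤ n(w) = |𝓡(w)|`, which leaves no room for more than `𝓡(x) = (𝓡(w) \ {s}) ∪ {t}`. The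
exchange condition also gives `𝓛(x) = 𝓛(w)`, so the sign changes because `ε(s) ≠ ε(t)`.

That `w_{ab}` has length `m(a,b)` needs the order of `a b` to be exactly `m(a,b)`, which is read off
from the geometric representation.
-/

section GeometricRepresentation

open Module Polynomial.Chebyshev Real

/-- The `i`-th simple coroot of the geometric representation, a linear form on the space spanned
by the simple roots `αⱼ = Finsupp.single j 1`. It takes the value `-2 cos (π / m(i,j))` at `αⱼ`;
since `π / 0 = 0`, this is `-2` when `m(i,j) = ∞`. -/
noncomputable def simpleCoroot (M : CoxeterMatrix B) (i : B) : Dual ℝ (B →₀ ℝ) :=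
  Finsupp.linearCombination ℝ fun j => -2 * cos (π / M i j)

lemma simpleCoroot_single (i j : B) (x : ℝ) :
    simpleCoroot M i (Finsupp.single j x) = -2 * cos (π / M i j) * x := by
  rw [simpleCoroot, Finsupp.linearCombination_single, smul_eq_mul, mul_comm]

lemma simpleCoroot_single_self (i : B) (x : ℝ) :
    simpleCoroot M i (Finsupp.single i x) = 2 * x := by
  simp [simpleCoroot_single]

/-- The reflection by which the generator `i` acts in the geometric representation. -/
noncomputable def geomReflection (M : CoxeterMatrix B) (i : B) : (B →₀ ℝ) ≃ₗ[ℝ] (B →₀ ℝ) :=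
  reflection ((simpleCoroot_single_self (M := M) i 1).trans (mul_one 2))

lemma geomReflection_mul_self (i : B) : geomReflection M i * geomReflection M i = 1 := by
  rw [geomReflection, mul_eq_one_iff_eq_inv, reflection_inv]

lemma geomReflection_apply_of_simpleCoroot_eq_zero {i : B} {z : B →₀ ℝ}
    (hz : simpleCoroot M i z = 0) : geomReflection M i z = z := by
  rw [geomReflection, reflection_apply, hz, zero_smul, sub_zero]

lemma geomReflection_single_add_single (i j : B) (x y : ℝ) :
    geomReflection M i (Finsupp.single i x + Finsupp.single j y) =
      Finsupp.single i (2 * cos (π / M i j) * y - x) + Finsupp.single j y := by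
  have hcoroot : simpleCoroot M i (Finsupp.single i x + Finsupp.single j y) =
      2 * x - 2 * cos (π / M i j) * y := by
    rw [map_add, simpleCoroot_single_self, simpleCoroot_single]
    ring
  rw [geomReflection, reflection_apply, hcoroot, Finsupp.smul_single, smul_eq_mul, mul_one,
    add_sub_right_comm, ← Finsupp.single_sub]
  congr 2
  ring

/- Mathlib's `reflection_mul_reflection_pow_apply_self` evaluates at `2 cos (2π / m)` instead; at
`2 cos (π / m)` the denominator `sin (π / m)` is nonzero for `m = 2` as well. -/
lemma geomReflection_mul_pow_single (i j : B) (n : ℕ) :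
    ((geomReflection M i * geomReflection M j) ^ n) (Finsupp.single i 1) =
      Finsupp.single i ((S ℝ (2 * n)).eval (2 * cos (π / M i j))) +
        Finsupp.single j ((S ℝ (2 * n - 1)).eval (2 * cos (π / M i j))) := by
  have hrec (k : ℤ) : (S ℝ (k + 2)).eval (2 * cos (π / M i j)) =
      2 * cos (π / M i j) * (S ℝ (k + 1)).eval (2 * cos (π / M i j)) -
        (S ℝ k).eval (2 * cos (π / M i j)) := by
    simp [S_add_two]
  induction n with
  | zero => simp
  | succ n ih =>
    have hodd := hrec (2 * n - 1)
    have heven := hrec (2 * n)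
    rw [show (2 * n - 1 + 2 : ℤ) = 2 * n + 1 by ring, sub_add_cancel] at hodd
    rw [pow_succ', LinearEquiv.mul_apply, LinearEquiv.mul_apply, ih, add_comm,
      geomReflection_single_add_single, M.symmetric j i, ← hodd, add_comm,
      geomReflection_single_add_single, ← heven]
    push_cast
    ring_nf

lemma sin_pi_div_pos {m : ℕ} (hm : 2 ≤ m) : 0 < sin (π / m) := by
  have hm' : (1 : ℝ) < m := by exact_mod_cast hm
  exact sin_pos_of_pos_of_lt_pi (by positivity) (div_lt_self pi_pos hm')

lemma geomReflection_mul_pow_coxeterMatrix_single {i j : B} (hM : 2 ≤ M i j) (x : ℝ) :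
    ((geomReflection M i * geomReflection M j) ^ M i j) (Finsupp.single i x) =
      Finsupp.single i x := by
  have hsin := (sin_pi_div_pos hM).ne'
  have hangle : (M i j : ℝ) * (π / M i j) = π := mul_div_cancel₀ π (by positivity)
  have heven : (S ℝ (2 * M i j)).eval (2 * cos (π / M i j)) = 1 := by
    apply mul_right_cancel₀ hsin
    rw [S_two_mul_real_cos, one_mul, ← sin_add_two_pi (π / M i j)]
    congr 1
    push_cast
    linear_combination 2 * hangle
  have hodd : (S ℝ (2 * M i j - 1)).eval (2 * cos (π / M i j)) = 0 := by
    apply (mul_eq_zero_iff_right hsin).mp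
    rw [S_two_mul_real_cos, ← sin_two_pi]
    congr 1
    push_cast
    linear_combination 2 * hangle
  rw [← Finsupp.smul_single_one, map_smul, geomReflection_mul_pow_single, heven, hodd,
    Finsupp.single_zero, add_zero]

/- The Gram determinant of `αᵢ` and `αⱼ` is `4 sin² (π / m(i,j)) ≠ 0`, so their span is a complement
of the common kernel of the two coroots. -/
lemma exists_simpleCoroot_sub_eq_zero {i j : B} (hM : 2 ≤ M i j) (z : B →₀ ℝ) :
    ∃ x y : ℝ,
      simpleCoroot M i (z - (Finsupp.single i x + Finsupp.single j y)) = 0 ∧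
      simpleCoroot M j (z - (Finsupp.single i x + Finsupp.single j y)) = 0 := by
  have hsin := (sin_pi_div_pos hM).ne'
  have hsq := sin_sq_add_cos_sq (π / M i j)
  set c := cos (π / M i j) with hc
  set d := sin (π / M i j)
  set a := simpleCoroot M i z with ha
  set b := simpleCoroot M j z with hb
  refine ⟨(a + c * b) / (2 * d ^ 2), (b + c * a) / (2 * d ^ 2), ?_, ?_⟩ <;>
    simp only [map_sub, map_add, simpleCoroot_single_self, simpleCoroot_single, M.symmetric j i,
      ← ha, ← hb, ← hc] <;>
    field_simp
  · linear_combination a * hsq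
  · linear_combination b * hsq

lemma isLiftable_geomReflection (M : CoxeterMatrix B) : M.IsLiftable (geomReflection M) := by
  intro i j
  rcases eq_or_ne i j with rfl | hij
  · rw [M.diagonal, pow_one, geomReflection_mul_self]
  rcases Nat.eq_zero_or_pos (M i j) with h0 | hpos
  · rw [h0, pow_zero]
  have hM : 2 ≤ M i j := by have := M.off_diagonal i j hij; omega
  set g := geomReflection M i * geomReflection M j with hg
  have hginv : g⁻¹ = geomReflection M j * geomReflection M i := by
    rw [inv_eq_iff_mul_eq_one, hg, mul_assoc, ← mul_assoc (geomReflection M j),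
      geomReflection_mul_self, one_mul, geomReflection_mul_self]
  have hi (x : ℝ) : (g ^ M i j) (Finsupp.single i x) = Finsupp.single i x :=
    geomReflection_mul_pow_coxeterMatrix_single hM x
  have hj (x : ℝ) : (g ^ M i j) (Finsupp.single j x) = Finsupp.single j x := by
    have h := geomReflection_mul_pow_coxeterMatrix_single (M.symmetric i j ▸ hM) x
    rw [← hginv, M.symmetric j i, inv_pow] at h
    exact ((LinearEquiv.symm_apply_eq _).mp h).symm
  ext1 z
  obtain ⟨x, y, hxi, hxj⟩ := exists_simpleCoroot_sub_eq_zero hM z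
  set u := Finsupp.single i x + Finsupp.single j y with hu
  have hgfix : g (z - u) = z - u := by
    rw [hg, LinearEquiv.mul_apply, geomReflection_apply_of_simpleCoroot_eq_zero hxj,
      geomReflection_apply_of_simpleCoroot_eq_zero hxi]
  have hpowfix : (g ^ M i j) (z - u) = z - u := by
    rw [LinearEquiv.pow_apply, Function.iterate_fixed hgfix]
  rw [LinearEquiv.coe_one, id, ← sub_add_cancel z u, map_add, hpowfix, hu, map_add, hi, hj]

lemma coxeterMatrix_dvd_of_geomReflection_mul_pow_eq_one {i j : B} {n : ℕ}
    (h : (geomReflection M i * geomReflection M j) ^ n = 1) : M i j ∣ n := by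
  rcases eq_or_ne i j with rfl | hij
  · rw [M.diagonal]
    exact one_dvd n
  have happly := geomReflection_mul_pow_single (M := M) i j n
  rw [h, LinearEquiv.coe_one, id] at happly
  have heven : (S ℝ (2 * n)).eval (2 * cos (π / M i j)) = 1 := by
    simpa [hij] using (DFunLike.congr_fun happly i).symm
  have hodd : (S ℝ (2 * n - 1)).eval (2 * cos (π / M i j)) = 0 := by
    simpa [hij] using (DFunLike.congr_fun happly j).symm
  rcases Nat.eq_zero_or_pos (M i j) with h0 | hpos
  · have : (n : ℝ) = 0 := by simpa [h0, S_eval_two] using hodd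
    rw [Nat.cast_eq_zero.mp this]
    exact dvd_zero _
  have hM : 2 ≤ M i j := by have := M.off_diagonal i j hij; omega
  have hsin := (sin_pi_div_pos hM).ne'
  have hsin_two_mul : sin (2 * n * (π / M i j)) = 0 := by
    simpa [hodd] using (S_two_mul_real_cos (π / M i j) (2 * n - 1)).symm
  have hcos_two_mul : cos (2 * n * (π / M i j)) = 1 := by
    have := S_two_mul_real_cos (π / M i j) (2 * n)
    push_cast at this
    rw [heven, add_mul, one_mul, one_mul, sin_add, hsin_two_mul, zero_mul, zero_add] at this
    exact (mul_eq_right₀ hsin).mp this.symm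
  obtain ⟨k, hk⟩ := (cos_eq_one_iff _).mp hcos_two_mul
  have hnk : (n : ℝ) = M i j * k := by
    have := pi_pos
    field_simp at hk
    linarith
  exact Int.natCast_dvd_natCast.mp ⟨k, by exact_mod_cast hnk⟩

lemma orderOf_simple_mul_simple (i j : B) : orderOf (cs.simple i * cs.simple j) = M i j := by
  refine Nat.dvd_antisymm (orderOf_dvd_of_pow_eq_one (cs.simple_mul_simple_pow i j))
    (coxeterMatrix_dvd_of_geomReflection_mul_pow_eq_one ?_)
  have h := congrArg (cs.lift ⟨_, isLiftable_geomReflection M⟩)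
    (pow_orderOf_eq_one (cs.simple i * cs.simple j))
  rwa [map_pow, map_mul, map_one, cs.lift_apply_simple, cs.lift_apply_simple] at h

lemma simple_injective : Function.Injective cs.simple := by
  intro i j hij
  by_contra hne
  have h := orderOf_simple_mul_simple cs i j
  rw [hij, cs.simple_mul_simple_self, orderOf_one] at h
  exact M.off_diagonal i j hne h.symm

end GeometricRepresentation

section Exchange

lemma prod_map_alternatingWord {N : Type*} [Monoid N] (f : B → N) (i j : B) (k : ℕ) :
    ((alternatingWord i j (2 * k)).map f).prod = (f i * f j) ^ k := by
  induction k with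
  | zero => simp [alternatingWord]
  | succ k ih =>
    rw [show 2 * (k + 1) = 2 * k + 1 + 1 by ring, alternatingWord_succ', alternatingWord_succ',
      if_neg (by simp), if_pos (by simp), List.map_cons, List.map_cons, List.prod_cons,
      List.prod_cons, ih, pow_succ', mul_assoc]

lemma rightInvSeq_append (ω ω' : List B) :
    cs.rightInvSeq (ω ++ ω') =
      (cs.rightInvSeq ω).map (MulAut.conj (cs.wordProd ω')⁻¹) ++ cs.rightInvSeq ω' := by
  induction ω with
  | nil => simp
  | cons i ω ih =>
    simp only [List.cons_append, rightInvSeq, ih, List.map_cons, cs.wordProd_append,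
      MulAut.conj_apply, mul_inv_rev, inv_inv, mul_assoc]

lemma rightInvSeq_alternatingWord (i j : B) (k : ℕ) :
    cs.rightInvSeq (alternatingWord i j k) =
      ((List.range k).map fun q => (cs.simple j * cs.simple i) ^ q * cs.simple j).reverse := by
  induction k generalizing i j with
  | zero => rfl
  | succ k ih =>
    rw [alternatingWord_succ, cs.rightInvSeq_concat, ih, List.range_succ_eq_map, List.map_cons,
      List.map_map, List.reverse_cons, pow_zero, one_mul, List.concat_eq_append, List.map_reverse,
      List.map_map]
    congr 3
    funext q
    simp only [Function.comp_apply, MulAut.conj_apply, cs.inv_simple, pow_succ, ← mul_assoc,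
      ← mul_pow_mul]

open Classical in
lemma even_count_rightInvSeq_alternatingWord (i j : B) (t : W) :
    Even ((cs.rightInvSeq (alternatingWord i j (2 * M i j))).count t) := by
  rw [rightInvSeq_alternatingWord, List.count_reverse, two_mul, List.range_add, List.map_append,
    List.map_map, List.count_append]
  simp only [Function.comp_def, pow_add, cs.simple_mul_simple_pow', one_mul]
  exact Even.add_self _

open Classical in
/-- The involution of `W × ℤ/2` that conjugates the first component by `sᵢ` and changes the sign
exactly when the first component is `sᵢ`. Composed along a word, the signs count, modulo 2, the
occurrences of an element in the right inversion sequence. -/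
noncomputable def signedConj (i : B) : Function.End (W × ZMod 2) :=
  fun p => (cs.simple i * p.1 * cs.simple i, p.2 + if p.1 = cs.simple i then 1 else 0)

open Classical in
lemma prod_map_signedConj_apply (ω : List B) (p : W × ZMod 2) :
    (ω.map (signedConj cs)).prod p =
      (cs.wordProd ω * p.1 * (cs.wordProd ω)⁻¹, p.2 + ((cs.rightInvSeq ω).count p.1 : ℕ)) := by
  induction ω with
  | nil => simp only [List.map_nil, List.prod_nil, cs.wordProd_nil, rightInvSeq_nil,
      List.count_nil, one_mul, inv_one, mul_one, Nat.cast_zero, add_zero, Prod.mk.eta,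
      Function.End.one_def, id]
  | cons i ω ih =>
    have hconj : cs.wordProd ω * p.1 * (cs.wordProd ω)⁻¹ = cs.simple i ↔
        (cs.wordProd ω)⁻¹ * cs.simple i * cs.wordProd ω = p.1 := by
      rw [mul_inv_eq_iff_eq_mul, mul_assoc, inv_mul_eq_iff_eq_mul, eq_comm]
    rw [List.map_cons, List.prod_cons]
    change signedConj cs i ((ω.map (signedConj cs)).prod p) = _
    rw [ih, signedConj, rightInvSeq, List.count_cons, cs.wordProd_cons]
    simp only [beq_iff_eq, hconj, mul_inv_rev, cs.inv_simple]
    push_cast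
    simp only [mul_assoc, add_assoc]

lemma isLiftable_signedConj : M.IsLiftable (signedConj cs) := by
  classical
  intro i j
  funext p
  have hprod : cs.wordProd (alternatingWord i j (2 * M i j)) = 1 := by
    rw [wordProd, prod_map_alternatingWord, cs.simple_mul_simple_pow]
  have heven := even_count_rightInvSeq_alternatingWord cs i j p.1
  rw [← prod_map_alternatingWord, prod_map_signedConj_apply, hprod,
    ZMod.natCast_eq_zero_iff_even.mpr heven, inv_one, one_mul, mul_one, add_zero,
    Function.End.one_def, id]

open Classical in
lemma count_rightInvSeq_eq_of_wordProd_eq {ω ω' : List B} (h : cs.wordProd ω = cs.wordProd ω')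
    (t : W) : ((cs.rightInvSeq ω).count t : ZMod 2) = (cs.rightInvSeq ω').count t := by
  have hlift (ω : List B) : cs.lift ⟨_, isLiftable_signedConj cs⟩ (cs.wordProd ω) (t, 0) =
      (cs.wordProd ω * t * (cs.wordProd ω)⁻¹, ((cs.rightInvSeq ω).count t : ZMod 2)) := by
    rw [wordProd, map_list_prod, List.map_map, ← wordProd]
    simp only [Function.comp_def, cs.lift_apply_simple]
    rw [prod_map_signedConj_apply, zero_add]
  have hsign := congrArg Prod.snd (hlift ω)
  rw [h, hlift ω'] at hsign
  exact hsign.symm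

/-- The exchange condition, for words that need not be reduced. -/
lemma simple_mem_rightInvSeq {ω : List B} {i : B} (h : cs.IsRightDescent (cs.wordProd ω) i) :
    cs.simple i ∈ cs.rightInvSeq ω := by
  classical
  obtain ⟨ω', hω', hprod⟩ := cs.exists_isReduced (cs.wordProd ω * cs.simple i)
  have hnotMem : cs.simple i ∉ cs.rightInvSeq ω' := by
    intro hmem
    have hlt := (cs.isRightInversion_of_mem_rightInvSeq hω' hmem).2
    rw [← hprod, cs.simple_mul_simple_cancel_right] at hlt
    exact lt_asymm h hlt
  have hconcat : cs.wordProd ω = cs.wordProd (ω' ++ [i]) := by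
    rw [cs.wordProd_append, ← hprod, cs.wordProd_singleton, cs.simple_mul_simple_cancel_right]
  have hfix : MulAut.conj (cs.wordProd [i])⁻¹ (cs.simple i) = cs.simple i := by simp
  have hnotMem_conj :
      cs.simple i ∉ (cs.rightInvSeq ω').map (MulAut.conj (cs.wordProd [i])⁻¹) := by
    intro hmem
    obtain ⟨t, ht, hconj⟩ := List.mem_map.mp hmem
    exact hnotMem (MulEquiv.injective _ (hconj.trans hfix.symm) ▸ ht)
  have hcount : (cs.rightInvSeq (ω' ++ [i])).count (cs.simple i) = 1 := by
    rw [rightInvSeq_append, List.count_append, cs.rightInvSeq_singleton, List.count_singleton_self,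
      List.count_eq_zero_of_not_mem hnotMem_conj]
  have hparity := count_rightInvSeq_eq_of_wordProd_eq cs hconcat (cs.simple i)
  rw [hcount] at hparity
  by_contra hmem
  rw [List.count_eq_zero_of_not_mem hmem] at hparity
  exact absurd hparity (by decide)

lemma exists_mul_simple_eq_mul {y u : W} {i : B}
    (hlen : cs.length (y * u) = cs.length y + cs.length u) (hi : cs.IsRightDescent (y * u) i)
    (hu : ¬ cs.IsRightDescent u i) :
    ∃ y', y * u * cs.simple i = y' * u ∧ cs.length y' + 1 = cs.length y := by
  obtain ⟨ωy, hωy, rfl⟩ := cs.exists_isReduced y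
  obtain ⟨ωu, hωu, rfl⟩ := cs.exists_isReduced u
  have hmem := simple_mem_rightInvSeq cs (cs.wordProd_append ωy ωu ▸ hi)
  rw [rightInvSeq_append, List.mem_append, List.mem_map] at hmem
  rcases hmem with ⟨t, ht, hconj⟩ | hmem
  · have heq : cs.wordProd ωy * cs.wordProd ωu * cs.simple i =
        cs.wordProd ωy * t * cs.wordProd ωu := by
      rw [← hconj, MulAut.conj_apply]
      group
    refine ⟨cs.wordProd ωy * t, heq, ?_⟩
    have hlt := (cs.isRightInversion_of_mem_rightInvSeq hωy ht).2
    have hle := cs.length_mul_le (cs.wordProd ωy * t) (cs.wordProd ωu)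
    rw [cs.isRightDescent_iff, heq] at hi
    omega
  · exact absurd (cs.isRightInversion_of_mem_rightInvSeq hωu hmem).2 hu

lemma finite_rightDescents (w : W) : (rightDescents cs w).Finite := by
  obtain ⟨ω, rfl⟩ := cs.wordProd_surjective w
  exact Set.Finite.of_injOn (t := {t | t ∈ cs.rightInvSeq ω})
    (fun _ hi => simple_mem_rightInvSeq cs hi)
    (simple_injective cs).injOn (List.finite_toSet _)

/- Otherwise `w = s_r x = x s`, and then `t` would be a right descent of `w`. -/
lemma leftDescents_mul_simple {w : W} {s t : B} (hs : cs.IsRightDescent w s)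
    (ht : ¬ cs.IsRightDescent w t) (hxt : cs.IsRightDescent (w * cs.simple s) t) :
    leftDescents cs (w * cs.simple s) = leftDescents cs w := by
  have hlen := cs.isRightDescent_iff.mp hs
  refine Set.Subset.antisymm (fun r (hr : cs.IsLeftDescent _ r) => ?_)
    fun r (hr : cs.IsLeftDescent _ r) => ?_
  · have hrx := cs.isLeftDescent_iff.mp hr
    have hle := cs.length_mul_le (cs.simple r * (w * cs.simple s)) (cs.simple s)
    rw [mul_assoc, cs.simple_mul_simple_cancel_right, cs.length_simple] at hle
    change cs.length _ < _
    omega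
  · by_contra hrx
    have hinv : cs.simple s * (w * cs.simple s)⁻¹ = w⁻¹ := by
      rw [mul_inv_rev, cs.inv_simple, cs.simple_mul_simple_cancel_left]
    obtain ⟨y', hy', hlen'⟩ := exists_mul_simple_eq_mul cs
      (y := cs.simple s) (u := (w * cs.simple s)⁻¹) (i := r)
      (by rw [hinv, cs.length_inv, cs.length_inv, cs.length_simple]; omega)
      (by rwa [hinv, cs.isRightDescent_inv_iff]) (by rwa [cs.isRightDescent_inv_iff])
    rw [cs.length_simple, Nat.add_eq_right, cs.length_eq_zero_iff] at hlen'
    rw [hinv, hlen', one_mul] at hy'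
    have hrw : w * cs.simple s = cs.simple r * w := by
      rw [← inv_inj, ← hy', mul_inv_rev, cs.inv_simple]
    apply ht
    have hxt' := cs.isRightDescent_iff.mp hxt
    have hle := cs.length_mul_le (cs.simple r) (w * cs.simple s * cs.simple t)
    rw [hrw, mul_assoc, cs.simple_mul_simple_cancel_left, cs.length_simple] at hle
    rw [hrw, mul_assoc] at hxt'
    rw [IsRightDescent]
    rw [hrw] at hlen
    omega

end Exchange


section FullyCommutative

lemma not_isRightDescent_wordProd_alternatingWord {a b : B} {k : ℕ}
    (hk : M a b = 0 ∨ k < M a b) :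
    ¬ cs.IsRightDescent (cs.wordProd (alternatingWord b a k)) b := by
  intro hb
  have hmem := simple_mem_rightInvSeq cs hb
  rw [rightInvSeq_alternatingWord, List.mem_reverse, List.mem_map] at hmem
  obtain ⟨q, hq, hpow⟩ := hmem
  have hone : (cs.simple a * cs.simple b) ^ (q + 1) = 1 := by
    rw [pow_succ, ← mul_assoc, hpow, cs.simple_mul_simple_self]
  have hdvd := orderOf_dvd_of_pow_eq_one hone
  rw [orderOf_simple_mul_simple] at hdvd
  rw [List.mem_range] at hq
  rcases hk with h0 | hlt
  · rw [h0, zero_dvd_iff] at hdvd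
    omega
  · have := Nat.le_of_dvd q.succ_pos hdvd
    omega

lemma isReduced_alternatingWord {a b : B} {k : ℕ} (hk : M a b = 0 ∨ k ≤ M a b) :
    cs.IsReduced (alternatingWord a b k) := by
  induction k generalizing a b with
  | zero => simp [CoxeterSystem.IsReduced, alternatingWord]
  | succ k ih =>
    have hnot := cs.not_isRightDescent_iff.mp
      (not_isRightDescent_wordProd_alternatingWord cs (a := a) (b := b) (k := k) (by omega))
    rw [CoxeterSystem.IsReduced, alternatingWord_succ, cs.wordProd_concat, hnot,
      ih (M.symmetric a b ▸ by omega), List.length_concat]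

/- Each letter is split off by the exchange condition, used with the two descents in turn. -/
lemma exists_eq_mul_wordProd_alternatingWord {w : W} {a b : B} (ha : cs.IsRightDescent w a)
    (hb : cs.IsRightDescent w b) {k : ℕ} (hk : M a b = 0 ∨ k ≤ M a b) :
    ∃ y, w = y * cs.wordProd (alternatingWord a b k) ∧ cs.length w = cs.length y + k := by
  induction k generalizing a b with
  | zero => exact ⟨w, by simp [alternatingWord], rfl⟩
  | succ k ih =>
    have hk' : M b a = 0 ∨ k ≤ M b a := M.symmetric a b ▸ by omega
    obtain ⟨y, rfl, hlen⟩ := ih hb ha hk'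
    have hred : cs.length (cs.wordProd (alternatingWord b a k)) = k := by
      rw [(isReduced_alternatingWord cs hk').eq, length_alternatingWord]
    obtain ⟨y', hy', hlen'⟩ := exists_mul_simple_eq_mul cs (hlen.trans (by rw [hred])) hb
      (not_isRightDescent_wordProd_alternatingWord cs (by omega))
    refine ⟨y', ?_, by omega⟩
    rw [alternatingWord_succ, cs.wordProd_concat, ← mul_assoc, ← hy',
      cs.simple_mul_simple_cancel_right]

lemma coxeterMatrix_eq_two_of_fullyComm {w : W} (hw : FullyComm cs w) {a b : B} (hab : a ≠ b)
    (ha : cs.IsRightDescent w a) (hb : cs.IsRightDescent w b) : M a b = 2 := by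
  have hne := M.off_diagonal a b hab
  by_contra hne_two
  rcases Nat.eq_zero_or_pos (M a b) with h0 | hpos
  · obtain ⟨y, -, hlen⟩ := exists_eq_mul_wordProd_alternatingWord cs ha hb
      (k := cs.length w + 1) (Or.inl h0)
    omega
  · obtain ⟨y, hy, hlen⟩ := exists_eq_mul_wordProd_alternatingWord cs ha hb (Or.inr le_rfl)
    have hlongest : cs.length (longest cs a b) = M a b := by
      rw [longest, (isReduced_alternatingWord cs (Or.inr le_rfl)).eq, length_alternatingWord]
    refine hw ⟨a, b, by omega, y, 1, by rwa [mul_one], ?_⟩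
    rw [hlongest, cs.length_one, add_zero, hlen]

lemma isRightDescent_mul_simple {w : W} {a b : B} (hab : a ≠ b) (ha : cs.IsRightDescent w a)
    (hb : cs.IsRightDescent w b) : cs.IsRightDescent (w * cs.simple a) b := by
  have hne := M.off_diagonal b a hab.symm
  obtain ⟨y, hy, hlen⟩ := exists_eq_mul_wordProd_alternatingWord cs hb ha (k := 2) (by omega)
  have hwab : w * cs.simple a * cs.simple b = y := by
    rw [hy]
    simp [alternatingWord, cs.wordProd_cons, mul_assoc]
  have hlen_a := cs.isRightDescent_iff.mp ha
  rw [IsRightDescent, hwab]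
  omega

lemma exists_eq_mul_wordProd {l : List B} (hl : l.Nodup) {w : W}
    (h : ∀ i ∈ l, cs.IsRightDescent w i) :
    ∃ y, w = y * cs.wordProd l ∧ cs.length w = cs.length y + l.length := by
  induction l using List.reverseRecOn generalizing w with
  | nil => exact ⟨w, by simp, by simp⟩
  | append_singleton l i ih =>
    obtain ⟨hnodup, -, hi⟩ := List.nodup_append.mp hl
    have hwi := h i (by simp)
    obtain ⟨y, hy, hlen⟩ := ih hnodup (w := w * cs.simple i) fun j hj =>
      isRightDescent_mul_simple cs (hi j hj i List.mem_cons_self).symm hwi (h j (by simp [hj]))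
    have hlen_i := cs.isRightDescent_iff.mp hwi
    refine ⟨y, ?_, by rw [List.length_append, List.length_singleton]; omega⟩
    rw [cs.wordProd_append, cs.wordProd_singleton, ← mul_assoc, ← hy,
      cs.simple_mul_simple_cancel_right]

lemma length_le_nval {w w₁ w₂ w₃ : W} (h : w = w₁ * w₂ * w₃)
    (hlen : cs.length w = cs.length w₁ + cs.length w₂ + cs.length w₃) (h₂ : IsCommProd cs w₂) :
    cs.length w₂ ≤ nval cs w := by
  refine le_csSup ⟨cs.length w, ?_⟩ ⟨w₁, w₂, w₃, h, hlen, h₂, rfl⟩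
  rintro _ ⟨v₁, v₂, v₃, -, hlen', -, rfl⟩
  omega

lemma ncard_rightDescents_le_nval {x u : W} (hx : FullyComm cs x)
    (hxu : cs.length (x * u) = cs.length x + cs.length u) :
    (rightDescents cs x).ncard ≤ nval cs (x * u) := by
  set l := (finite_rightDescents cs x).toFinset.toList with hl
  have hnodup : l.Nodup := Finset.nodup_toList _
  have hmem : ∀ i ∈ l, cs.IsRightDescent x i := by
    simp only [hl, Finset.mem_toList, Set.Finite.mem_toFinset]
    exact fun _ hi => hi
  obtain ⟨y, hy, hlen⟩ := exists_eq_mul_wordProd cs hnodup hmem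
  have hred : cs.IsReduced l := by
    refine le_antisymm (cs.length_wordProd_le l) ?_
    have hle := cs.length_mul_le y (cs.wordProd l)
    rw [← hy] at hle
    omega
  have hcomm : IsCommProd cs (cs.wordProd l) := ⟨l, hnodup, fun a ha b hb hab =>
    coxeterMatrix_eq_two_of_fullyComm cs hx hab (hmem a ha) (hmem b hb), hred, rfl⟩
  rw [Set.ncard_eq_toFinset_card _ (finite_rightDescents cs x), ← Finset.length_toList, ← hl,
    ← hred.eq]
  exact length_le_nval cs (congrArg (· * u) hy) (by rw [hxu, hlen, hred.eq]) hcomm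

lemma rightDescents_mul_simple {w : W} {s t : B} (hx : FullyComm cs (w * cs.simple s))
    (hn : (rightDescents cs w).ncard = nval cs w) (hs : cs.IsRightDescent w s)
    (ht : ¬ cs.IsRightDescent w t) (hxt : cs.IsRightDescent (w * cs.simple s) t) :
    rightDescents cs (w * cs.simple s) = insert t (rightDescents cs w \ {s}) := by
  have hsubset : insert t (rightDescents cs w \ {s}) ⊆ rightDescents cs (w * cs.simple s) :=
    Set.insert_subset hxt fun _ hr => isRightDescent_mul_simple cs (Ne.symm hr.2) hs hr.1
  have hcard : (insert t (rightDescents cs w \ {s})).ncard = nval cs w := by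
    rw [← hn]
    exact Set.ncard_exchange ht hs
  have hreduced : cs.length (w * cs.simple s * cs.simple s) =
      cs.length (w * cs.simple s) + cs.length (cs.simple s) := by
    rw [cs.simple_mul_simple_cancel_right, cs.length_simple, cs.isRightDescent_iff.mp hs]
  have hle := ncard_rightDescents_le_nval cs hx hreduced
  rw [cs.simple_mul_simple_cancel_right] at hle
  exact (Set.eq_of_subset_of_ncard_le hsubset (hle.trans hcard.ge)
    (finite_rightDescents cs _)).symm

end FullyCommutative

section Sign

lemma kSet_insert (ε : B → Bool) {J : Set B} (hJ : J.Finite) {t : B} (ht : t ∉ J) :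
    kSet ε (insert t J) = (if ε t then 1 else -1) * kSet ε J := by
  unfold kSet
  cases hε : ε t
  · have hmem : t ∈ {i | ε i = false} := hε
    rw [Set.insert_inter_of_mem hmem, Set.ncard_insert_of_notMem (fun h => ht h.1)
      (hJ.subset Set.inter_subset_left), pow_succ']
    rfl
  · rw [Set.insert_inter_of_notMem (by simp [hε]), if_pos rfl, one_mul]

lemma kSet_insert_sdiff_singleton {ε : B → Bool} {J : Set B} (hJ : J.Finite) {s t : B}
    (hs : s ∈ J) (ht : t ∉ J) (hε : ε s ≠ ε t) :
    kSet ε (insert t (J \ {s})) = - kSet ε J := by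
  have hJs : (J \ {s}).Finite := hJ.subset Set.sdiff_subset
  have hinsert : kSet ε J = kSet ε (insert s (J \ {s})) := by
    rw [Set.insert_sdiff_singleton, Set.insert_eq_of_mem hs]
  rw [hinsert, kSet_insert ε hJs fun h => ht h.1, kSet_insert ε hJs fun h => h.2 rfl]
  cases hεs : ε s <;> cases hεt : ε t <;> simp_all

lemma kElt_mul_simple {ε : B → Bool} {w : W} {s t : B} (hε : ε s ≠ ε t)
    (hx : FullyComm cs (w * cs.simple s)) (hn : (rightDescents cs w).ncard = nval cs w)
    (hs : cs.IsRightDescent w s) (ht : ¬ cs.IsRightDescent w t)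
    (hxt : cs.IsRightDescent (w * cs.simple s) t) :
    kElt cs ε (w * cs.simple s) = - kElt cs ε w := by
  rw [kElt, kElt, leftDescents_mul_simple cs hs ht hxt,
    rightDescents_mul_simple cs hx hn hs ht hxt,
    kSet_insert_sdiff_singleton (finite_rightDescents cs w) hs ht hε, mul_neg]

lemma kElt_eq_neg_of_rightStarReducible {ε : B → Bool} {w x : W} {s t : B} (hε : ε s ≠ ε t)
    (hx : FullyComm cs x) (hn : (rightDescents cs w).ncard = nval cs w)
    (h : RightStarReducible cs s t w x) : kElt cs ε w = - kElt cs ε x := by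
  rw [eq_neg_iff_add_eq_zero, add_comm, ← eq_neg_iff_add_eq_zero]
  obtain ⟨-, ⟨hs, ht, rfl, hxt⟩ | ⟨ht, hs, rfl, hxs⟩⟩ := h
  · exact kElt_mul_simple cs hε hx hn hs ht hxt
  · exact kElt_mul_simple cs hε.symm hx hn ht hs hxs

end Sign

section Inverse

lemma inv_longest (s t : B) : (longest cs s t)⁻¹ = longest cs s t := by
  rw [longest]
  by_cases heven : Even (M s t)
  · conv_rhs => rw [cs.wordProd_braidWord_eq s t, braidWord, M.symmetric t s]
    rw [cs.prod_alternatingWord_eq_mul_pow, cs.prod_alternatingWord_eq_mul_pow, if_pos heven,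
      if_pos heven, one_mul, one_mul, ← inv_pow, mul_inv_rev, cs.inv_simple, cs.inv_simple]
  · rw [cs.prod_alternatingWord_eq_mul_pow, if_neg heven, mul_inv_rev, ← inv_pow, mul_inv_rev,
      cs.inv_simple, cs.inv_simple, mul_pow_mul]

lemma IsComplex.inv {w : W} (h : IsComplex cs w) : IsComplex cs w⁻¹ := by
  obtain ⟨s, t, hst, x₁, x₂, rfl, hlen⟩ := h
  refine ⟨s, t, hst, x₂⁻¹, x₁⁻¹, ?_, ?_⟩
  · rw [mul_inv_rev, mul_inv_rev, inv_longest, mul_assoc]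
  · simp only [cs.length_inv]
    omega

lemma FullyComm.inv {w : W} (h : FullyComm cs w) : FullyComm cs w⁻¹ :=
  fun hinv => h (inv_inv w ▸ hinv.inv cs)

lemma IsCommProd.inv {w : W} (h : IsCommProd cs w) : IsCommProd cs w⁻¹ := by
  obtain ⟨l, hnodup, hcomm, hred, rfl⟩ := h
  exact ⟨l.reverse, List.nodup_reverse.mpr hnodup, by simpa using hcomm, hred.reverse, by simp⟩

lemma nval_le_nval_inv (w : W) : nval cs w ≤ nval cs w⁻¹ := by
  refine csSup_le' ?_
  rintro _ ⟨w₁, w₂, w₃, rfl, hlen, hcomm, rfl⟩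
  rw [← cs.length_inv w₂]
  refine length_le_nval cs (w₁ := w₃⁻¹) (w₃ := w₁⁻¹) (by group) ?_ (hcomm.inv cs)
  simp only [cs.length_inv]
  omega

lemma nval_inv (w : W) : nval cs w⁻¹ = nval cs w :=
  le_antisymm (by simpa using nval_le_nval_inv cs w⁻¹) (nval_le_nval_inv cs w)

lemma leftDescents_inv (w : W) : leftDescents cs w⁻¹ = rightDescents cs w :=
  Set.ext fun _ => cs.isLeftDescent_inv_iff

lemma rightDescents_inv (w : W) : rightDescents cs w⁻¹ = leftDescents cs w :=
  Set.ext fun _ => cs.isRightDescent_inv_iff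

lemma kElt_inv (ε : B → Bool) (w : W) : kElt cs ε w⁻¹ = kElt cs ε w := by
  rw [kElt, kElt, leftDescents_inv, rightDescents_inv, mul_comm]

lemma LeftStarReducible.inv {s t : B} {w x : W} (h : LeftStarReducible cs s t w x) :
    RightStarReducible cs s t w⁻¹ x⁻¹ := by
  simpa [LeftStarReducible, RightStarReducible, cs.isRightDescent_inv_iff, inv_eq_iff_eq_inv]
    using h

end Inverse

/-- Lemma 7.6: suppose the Coxeter graph is bipartite with 2-colouring `ε`.  Let
`w ∈ W_c` satisfy `|𝓛(w)| = n(w)` (respectively `|𝓡(w)| = n(w)`), and suppose `w` is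
left (respectively right) star reducible to `x ∈ W_c`.  Then `k_ε(w) = −k_ε(x)`. -/
theorem statement10 (ε : B → Bool) (hbip : ∀ s t : B, Noncomm M s t → ε s ≠ ε t)
    (w x : W) (hw : FullyComm cs w) (hx : FullyComm cs x) :
    (((leftDescents cs w).ncard = nval cs w) →
      (∃ s t : B, LeftStarReducible cs s t w x) → kElt cs ε w = - kElt cs ε x) ∧
    (((rightDescents cs w).ncard = nval cs w) →
      (∃ s t : B, RightStarReducible cs s t w x) → kElt cs ε w = - kElt cs ε x) := by
  refine ⟨fun hn ⟨s, t, h⟩ => ?_, fun hn ⟨s, t, h⟩ =>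
    kElt_eq_neg_of_rightStarReducible cs (hbip s t h.1) hx hn h⟩
  rw [← kElt_inv cs ε w, ← kElt_inv cs ε x]
  refine kElt_eq_neg_of_rightStarReducible cs (hbip s t h.1) (hx.inv cs) ?_ (h.inv cs)
  rw [rightDescents_inv, nval_inv, hn]
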